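/- Let M(ζ,z) denote the 2×2 complex matrix with first row (1/v² + y²/v³, −y/v²) and second row (−y/v², 1/v), where v = Im ζ and y = Im z. For every matrix A with integer entries a, b, c, d and determinant ad − bc = 1, every pair of integers (n₁, n₂), and all ζ, z ∈ ℂ with Im ζ > 0, let g(ζ,z) = ((aζ+b)/(cζ+d), (z + n₁ζ + n₂)/(cζ+d)) and let J(ζ,z) be the 2×2 complex matrix with first row (1/(cζ+d)², (n₁(cζ+d) − c(z + n₁ζ + n₂))/(cζ+d)²) and second row (0, 1/(cζ+d)). Then Im of the first coordinate of g(ζ,z) is positive, and J(ζ,z) · M(g(ζ,z)) · J(ζ,z)^* = M(ζ,z), where J^* denotes the conjugate transpose. -/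

import Mathlib

open Complex Matrix

/-- The coefficient matrix of the Kähler metric `η = i∂∂̄(−log v² + y²/v)` on `ℍ⁺ × ℂ`
in the frame `(dζ, dz)`, where `v = Im ζ` and `y = Im z`. -/
noncomputable def etaMatrix (ζ z : ℂ) : Matrix (Fin 2) (Fin 2) ℂ :=
  !![1/((ζ.im : ℂ))^2 + ((z.im : ℂ))^2/((ζ.im : ℂ))^3, -((z.im : ℂ))/((ζ.im : ℂ))^2;
     -((z.im : ℂ))/((ζ.im : ℂ))^2, 1/((ζ.im : ℂ))]

/-!
The metric splits into two rank-one Hermitian pieces,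
`M = v⁻² e₀e₀* + v⁻³ ww*` with `w = (y, -v)`, and each of the vectors `e₀`, `w` is carried by the
Jacobian `J` of a transformation to a multiple of itself: with `j = cζ + d`, one has
`J e₀ = j⁻² e₀` and `J w(g(ζ, z)) = (|j|² j)⁻¹ w(ζ, z)`. Since `Im ζ` is divided by `|j|²` under
the action, the factors `|j|⁻⁴` and `|j|⁻⁶` so produced cancel against those of the coefficients
`v⁻²` and `v⁻³`.
-/

theorem mul_vecMulVec_star_mul_conjTranspose {m n R : Type*} [Fintype n]
    [NonUnitalSemiring R] [StarRing R] (A : Matrix m n R) (u : n → R) :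
    A * vecMulVec u (star u) * Aᴴ = vecMulVec (A *ᵥ u) (star (A *ᵥ u)) := by
  rw [mul_vecMulVec, vecMulVec_mul, star_mulVec]

theorem vecMulVec_smul_star_smul {n R : Type*} [CommSemiring R] [StarRing R]
    (s : R) (u : n → R) :
    vecMulVec (s • u) (star (s • u)) = (s * star s) • vecMulVec u (star u) := by
  rw [star_smul, smul_vecMulVec, vecMulVec_smul, smul_smul]

/-- The vector `w = (y, -v)` spanning the rank-one part `v⁻³ ww*` of the metric `η`. -/
def etaVector (ζ z : ℂ) : Fin 2 → ℂ := ![(z.im : ℂ), -(ζ.im : ℂ)]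

theorem etaMatrix_eq_add_vecMulVec {ζ : ℂ} (hζ : ζ.im ≠ 0) (z : ℂ) :
    etaMatrix ζ z =
      ((ζ.im : ℂ) ^ 2)⁻¹ • vecMulVec (Pi.single 0 1) (star (Pi.single 0 1)) +
        ((ζ.im : ℂ) ^ 3)⁻¹ • vecMulVec (etaVector ζ z) (star (etaVector ζ z)) := by
  have hv : (ζ.im : ℂ) ≠ 0 := ofReal_ne_zero.mpr hζ
  ext i k
  simp only [Matrix.add_apply, Matrix.smul_apply, vecMulVec_apply, etaMatrix, etaVector]
  fin_cases i <;> fin_cases k <;> simp <;> field_simp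

/-- The Jacobian matrix at `(ζ, z)` of the transformation
`(ζ, z) ↦ ((aζ + b) / (cζ + d), (z + n₁ζ + n₂) / (cζ + d))` with `ad - bc = 1`. Rows are indexed by
the variable of differentiation and columns by the component, and `a`, `b` have been eliminated by
the determinant condition. -/
noncomputable def actionJacobian (c d n₁ n₂ : ℝ) (ζ z : ℂ) : Matrix (Fin 2) (Fin 2) ℂ :=
  !![1 / (c * ζ + d) ^ 2, (n₁ * (c * ζ + d) - c * (z + n₁ * ζ + n₂)) / (c * ζ + d) ^ 2;
     0, 1 / (c * ζ + d)]

section Action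

variable {a b c d : ℝ} {ζ : ℂ}

theorem linear_ne_zero_of_det_eq_one (hdet : a * d - b * c = 1) (hζ : ζ.im ≠ 0) :
    (c * ζ + d : ℂ) ≠ 0 := by
  refine UpperHalfPlane.linear_ne_zero_of_im (cd := ![c, d]) hζ fun hcd => ?_
  have hc : c = 0 := congrFun hcd 0
  have hd : d = 0 := congrFun hcd 1
  simp [hc, hd] at hdet

theorem im_moebius_eq_div_normSq (hdet : a * d - b * c = 1) (ζ : ℂ) :
    ((a * ζ + b) / (c * ζ + d) : ℂ).im = ζ.im / normSq (c * ζ + d) := by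
  rw [div_im, ← sub_div]
  congr 1
  simp only [add_im, add_re, re_ofReal_mul, im_ofReal_mul, ofReal_re, ofReal_im]
  linear_combination ζ.im * hdet

theorem im_moebius_pos (hdet : a * d - b * c = 1) (hζ : 0 < ζ.im) :
    0 < ((a * ζ + b) / (c * ζ + d) : ℂ).im := by
  rw [im_moebius_eq_div_normSq hdet]
  exact div_pos hζ (normSq_pos.mpr (linear_ne_zero_of_det_eq_one hdet hζ.ne'))

/-- The right-hand side is real although its two summands need not be: it is written so that
the second one cancels in `actionJacobian_mulVec_etaVector`. -/
theorem ofReal_im_translate_div (c d n₁ n₂ : ℝ) (ζ z : ℂ) :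
    (((z + n₁ * ζ + n₂) / (c * ζ + d) : ℂ).im : ℂ) =
      (z.im * (c * ζ + d) + ζ.im * (n₁ * (c * ζ + d) - c * (z + n₁ * ζ + n₂))) /
        normSq (c * ζ + d) := by
  rw [div_im, ← sub_div, ofReal_div]
  congr 1
  apply Complex.ext <;> simp <;> ring

theorem actionJacobian_mulVec_single_zero (c d n₁ n₂ : ℝ) (ζ z : ℂ) :
    actionJacobian c d n₁ n₂ ζ z *ᵥ Pi.single 0 1 =
      ((c * ζ + d : ℂ) ^ 2)⁻¹ • (Pi.single 0 1 : Fin 2 → ℂ) := by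
  ext i
  fin_cases i <;> simp [actionJacobian]

theorem actionJacobian_mulVec_etaVector (hdet : a * d - b * c = 1) (hζ : ζ.im ≠ 0)
    (n₁ n₂ : ℝ) (z : ℂ) :
    actionJacobian c d n₁ n₂ ζ z *ᵥ
        etaVector ((a * ζ + b) / (c * ζ + d)) ((z + n₁ * ζ + n₂) / (c * ζ + d)) =
      (normSq (c * ζ + d) * (c * ζ + d) : ℂ)⁻¹ • etaVector ζ z := by
  have hj : (c * ζ + d : ℂ) ≠ 0 := linear_ne_zero_of_det_eq_one hdet hζ
  have hN : (normSq (c * ζ + d) : ℂ) ≠ 0 := ofReal_ne_zero.mpr (normSq_eq_zero.not.mpr hj)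
  simp only [etaVector, actionJacobian, ofReal_im_translate_div, im_moebius_eq_div_normSq hdet,
    ofReal_div]
  ext i
  fin_cases i <;> simp [vecHead, vecTail] <;> field_simp
  ring

theorem actionJacobian_mul_etaMatrix_mul_conjTranspose (hdet : a * d - b * c = 1)
    (hζ : ζ.im ≠ 0) (n₁ n₂ : ℝ) (z : ℂ) :
    actionJacobian c d n₁ n₂ ζ z *
        etaMatrix ((a * ζ + b) / (c * ζ + d)) ((z + n₁ * ζ + n₂) / (c * ζ + d)) *
        (actionJacobian c d n₁ n₂ ζ z)ᴴ = etaMatrix ζ z := by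
  have hN : normSq (c * ζ + d) ≠ 0 :=
    normSq_eq_zero.not.mpr (linear_ne_zero_of_det_eq_one hdet hζ)
  have hζ' : ((a * ζ + b) / (c * ζ + d) : ℂ).im ≠ 0 := by
    rw [im_moebius_eq_div_normSq hdet]
    exact div_ne_zero hζ hN
  rw [etaMatrix_eq_add_vecMulVec hζ', etaMatrix_eq_add_vecMulVec hζ, mul_add, add_mul]
  simp only [mul_smul_comm, smul_mul_assoc, mul_vecMulVec_star_mul_conjTranspose,
    actionJacobian_mulVec_single_zero, actionJacobian_mulVec_etaVector hdet hζ,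
    vecMulVec_smul_star_smul, star_def, mul_conj, smul_smul, im_moebius_eq_div_normSq hdet]
  have hNc : (normSq (c * ζ + d) : ℂ) ≠ 0 := ofReal_ne_zero.mpr hN
  have hv : (ζ.im : ℂ) ≠ 0 := ofReal_ne_zero.mpr hζ
  congr 2
  · simp only [map_inv₀, map_pow, ofReal_div, ofReal_inv, ofReal_pow]
    field_simp
  · simp only [map_inv₀, map_mul, normSq_ofReal, ofReal_div, ofReal_inv, ofReal_mul]
    field_simp

end Action

theorem eta_invariant_general (a b c d n₁ n₂ : ℝ) (hdet : a * d - b * c = 1)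
    (ζ z : ℂ) (hζ : 0 < ζ.im) :
    0 < ((a * ζ + b) / (c * ζ + d) : ℂ).im ∧
    actionJacobian c d n₁ n₂ ζ z *
        etaMatrix ((a * ζ + b) / (c * ζ + d)) ((z + n₁ * ζ + n₂) / (c * ζ + d)) *
        (actionJacobian c d n₁ n₂ ζ z)ᴴ = etaMatrix ζ z :=
  ⟨im_moebius_pos hdet hζ, actionJacobian_mul_etaMatrix_mul_conjTranspose hdet hζ.ne' n₁ n₂ z⟩

/-- Lemma 2.1: the metric `η` is invariant under the group `𝒢` of transformations
`g(A,n)·(ζ,z) = ((aζ+b)/(cζ+d), (z+n₁ζ+n₂)/(cζ+d))`, `A ∈ SL₂(ℤ)`, `n ∈ ℤ²`. -/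
theorem eta_invariant (a b c d n₁ n₂ : ℤ) (hdet : a * d - b * c = 1)
    (ζ z : ℂ) (hζ : 0 < ζ.im) :
    0 < ((((a : ℂ) * ζ + (b : ℂ)) / ((c : ℂ) * ζ + (d : ℂ)))).im ∧
    (!![1/((c : ℂ) * ζ + (d : ℂ))^2,
        ((n₁ : ℂ) * ((c : ℂ) * ζ + (d : ℂ)) - (c : ℂ) * (z + (n₁ : ℂ) * ζ + (n₂ : ℂ))) /
          ((c : ℂ) * ζ + (d : ℂ))^2;
        0, 1/((c : ℂ) * ζ + (d : ℂ))]) *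
      etaMatrix (((a : ℂ) * ζ + (b : ℂ)) / ((c : ℂ) * ζ + (d : ℂ)))
        ((z + (n₁ : ℂ) * ζ + (n₂ : ℂ)) / ((c : ℂ) * ζ + (d : ℂ))) *
      (!![1/((c : ℂ) * ζ + (d : ℂ))^2,
        ((n₁ : ℂ) * ((c : ℂ) * ζ + (d : ℂ)) - (c : ℂ) * (z + (n₁ : ℂ) * ζ + (n₂ : ℂ))) /
          ((c : ℂ) * ζ + (d : ℂ))^2;
        0, 1/((c : ℂ) * ζ + (d : ℂ))])ᴴ = etaMatrix ζ z := by
  simpa only [actionJacobian, ofReal_intCast] using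
    eta_invariant_general a b c d n₁ n₂ (mod_cast hdet) ζ z hζ
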